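/- Let (𝔩,𝔪) be a permissible pair with the algorithm notations in place. Then for each fixed index i ∈ I, the local count D_i(𝔩,𝔪) = |ν(𝔩,𝔪)₁ ∩ ({i}×I)| − |ν(𝔩,𝔪)₂ ∩ ({i}×I)| + |ν(𝔩,𝔪)₃ ∩ ({i}×J)| equals 1. -/

import Mathlib

/-!
Fix `i ∈ I` with segment `Δ(b,e)`.  Segments of `𝔪` of equal depth are never related by `≪`, so
along a cycle `j_t → i_1 → … → i_s → j_t` of `σ` the begin points of `j_t, i_1, …, i_s` weakly
decrease and the end points of `i_1, …, i_s, j_t` weakly increase.  Hence the elements of the cycle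
with end point `e` form one run.  The step entering this run is counted by `ν₁` or `ν₃` exactly when
its source has begin point at least `b` (predicate `Enter t`), and the step leaving it is counted by
`ν₂` exactly when its source has begin point greater than `b` (predicate `Leave t`).  Each depth `t`
thus contributes `[Enter t] - [Leave t]`.

* `enter_of_mem`: a segment `x` of `𝔪` with `e(x) = e` and `b ≤ b(x)` forces `Enter (𝔡 x)`; so
  `Leave t` implies `Enter t`, and `Enter (𝔡 i)` holds.
* `not_leave_self`: `Leave (𝔡 i)` fails.
* `leave_of_enter`: if `t ≠ 𝔡 i` then `Enter t` implies `Leave t`.  For `t > 𝔡 i` in fact `Enter t`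
  fails, because `exists_ll_of_depth_lt` provides a segment of depth `t` strictly below `Δ_i`.
  For `t < 𝔡 i`, a last element of the run with begin point at most `b` would have depth at
  least `𝔡 i`.

So the depths with `Enter` are those with `Leave` together with the single extra depth `𝔡 i`.
-/

/-- A *segment* `Δ(a,b)`: a pair of integers `a ≤ b`.  `b` is the begin point
and `e` the end point. -/
structure Segment where
  b : ℤ
  e : ℤ
  le : b ≤ e

namespace Segment

/-- `Δ₁ ≪ Δ₂` : `b(Δ₁) < b(Δ₂)` and `e(Δ₁) < e(Δ₂)`. -/
def ll (Δ₁ Δ₂ : Segment) : Prop := Δ₁.b < Δ₂.b ∧ Δ₁.e < Δ₂.e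

/-- `Δ₁ ≺ Δ₂` : `b(Δ₁) < b(Δ₂)`, `e(Δ₁) < e(Δ₂)` and `e(Δ₁) ≥ b(Δ₂) - 1`. -/
def prec (Δ₁ Δ₂ : Segment) : Prop := Δ₁.b < Δ₂.b ∧ Δ₁.e < Δ₂.e ∧ Δ₂.b - 1 ≤ Δ₁.e

/-- `⁻Δ = Δ(a-1, b-1)`. -/
def shiftDown (Δ : Segment) : Segment := ⟨Δ.b - 1, Δ.e - 1, by have := Δ.le; omega⟩

end Segment

/-- The standing data of the inverse Knuth–Viennot algorithm: a nonzero multisegment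
`𝔪 = Σ_{i ∈ I} Δ_i` indexed by `I = Fin n` (linearly ordered compatibly with begin
points, ties broken by reversed end points), and a ladder multisegment
`𝔩 = Σ_{t ∈ J} Δ_{j_t}` indexed by `J = Fin l` (`jseg t` is the segment `Δ_{j_{t+1}}`,
enumerated so that `Δ_{j_l} ≪ ⋯ ≪ Δ_{j_1}`), such that the pair `(𝔩, 𝔪)` is
permissible. -/
structure KVData where
  n : ℕ
  l : ℕ
  npos : 0 < n
  lpos : 0 < l
  iseg : Fin n → Segment
  jseg : Fin l → Segment
  iOrder : ∀ i₁ i₂ : Fin n, i₂ < i₁ →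
    (iseg i₂).b < (iseg i₁).b ∨ ((iseg i₂).b = (iseg i₁).b ∧ (iseg i₁).e ≤ (iseg i₂).e)
  ladder : ∀ t t' : Fin l, t < t' → Segment.ll (jseg t') (jseg t)
  permissible : ∀ (m : ℕ) (c : Fin m → Fin n),
    (∀ r s : Fin m, r < s → Segment.ll (iseg (c s)) (iseg (c r))) →
    ∃ φ : Fin m → Fin l, StrictMono φ ∧
      ∀ t : Fin m, Segment.prec (Segment.shiftDown (iseg (c t))) (jseg (φ t))

namespace KVData

variable (D : KVData)

/-- The segment attached to an index in `I ⊔ J`. -/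
def segOf : Fin D.n ⊕ Fin D.l → Segment := Sum.elim D.iseg D.jseg

/-- The set `{t : ⁻Δ_i ≪ Δ_{j_t}}` (0-based positions in the ladder `𝔩`). -/
def dPrimeSet (i : Fin D.n) : Set ℕ :=
  {t : ℕ | ∃ h : t < D.l, Segment.ll (Segment.shiftDown (D.iseg i)) (D.jseg ⟨t, h⟩)}

/-- The set `{𝔡'(i_k) - k : i = i_0, Δ_{i_{r+1}} ≪ Δ_{i_r}}` whose minimum is `𝔡(i)`. -/
def depthSet (d' : Fin D.n → ℕ) (i : Fin D.n) : Set ℤ :=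
  {z : ℤ | ∃ (k : ℕ) (c : ℕ → Fin D.n), c 0 = i ∧
    (∀ r < k, Segment.ll (D.iseg (c (r + 1))) (D.iseg (c r))) ∧
    z = (d' (c k) : ℤ) - (k : ℤ)}

/-- `d'` is the function `𝔡'` and `d` the depth function `𝔡` on `I ⊔ J`
(`𝔡'(i) = max{t : ⁻Δ_i ≪ Δ_{j_t}}`, `𝔡(i) = min{𝔡'(i_k) - k}`, `𝔡(j_t) = t`). -/
def DepthSpec (d' : Fin D.n → ℕ) (d : Fin D.n ⊕ Fin D.l → ℤ) : Prop :=
  (∀ i, IsGreatest (D.dPrimeSet i) (d' i)) ∧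
  (∀ i, IsLeast (D.depthSet d' i) (d (Sum.inl i))) ∧
  (∀ t : Fin D.l, d (Sum.inr t) = (t : ℤ))

/-- `σ` is the permutation of `I ⊔ J` whose disjoint cycles are `(i_1, …, i_s, j_t)`
where `{i_1 > … > i_s} ∪ {j_t} = 𝔡⁻¹(t)`:  an element `i ∈ I` is sent to the largest
element of `I` below it in its fiber of `𝔡`, or to the `J`-element of the fiber if
there is none; the `J`-element of a fiber is sent to the largest `I`-element of the
fiber, or to itself if there is none. -/
def SigmaSpec (d : Fin D.n ⊕ Fin D.l → ℤ) (σ : Equiv.Perm (Fin D.n ⊕ Fin D.l)) : Prop :=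
  (∀ i : Fin D.n,
    (∃ i' : Fin D.n,
        IsGreatest {i'' : Fin D.n | i'' < i ∧ d (Sum.inl i'') = d (Sum.inl i)} i' ∧
        σ (Sum.inl i) = Sum.inl i')
    ∨ ((¬ ∃ i'' : Fin D.n, i'' < i ∧ d (Sum.inl i'') = d (Sum.inl i)) ∧
        ∃ t : Fin D.l, (t : ℤ) = d (Sum.inl i) ∧ σ (Sum.inl i) = Sum.inr t)) ∧
  (∀ t : Fin D.l,
    (∃ i : Fin D.n,
        IsGreatest {i' : Fin D.n | d (Sum.inl i') = (t : ℤ)} i ∧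
        σ (Sum.inr t) = Sum.inl i)
    ∨ ((¬ ∃ i : Fin D.n, d (Sum.inl i) = (t : ℤ)) ∧ σ (Sum.inr t) = Sum.inr t))

/-- `e(Δ♣_x) ≠ e(Δ_x)`, i.e. the end point changes at `x`
(recall `Δ♣_x = Δ(b(Δ_x), e(Δ_{σ(x)}))`). -/
def breaksEnd (σ : Equiv.Perm (Fin D.n ⊕ Fin D.l)) (x : Fin D.n ⊕ Fin D.l) : Prop :=
  (D.segOf (σ x)).e ≠ (D.segOf x).e

/-- `vee` is the map `x ↦ x^∨`:  `x^∨ = σ^{-r}(x)` for the least `r ≥ 1` such that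
`e(Δ♣_{σ^{-r}(x)}) ≠ e(Δ_{σ^{-r}(x)})`, and `x^∨ = j_{𝔡(x)}` if no such `r` exists. -/
def VeeSpec (d : Fin D.n ⊕ Fin D.l → ℤ) (σ : Equiv.Perm (Fin D.n ⊕ Fin D.l))
    (vee : Fin D.n ⊕ Fin D.l → Fin D.n ⊕ Fin D.l) : Prop :=
  ∀ x : Fin D.n ⊕ Fin D.l,
    ((∃ r : ℕ, 1 ≤ r ∧ D.breaksEnd σ ((⇑σ.symm)^[r] x)) →
      ∃ r : ℕ, 1 ≤ r ∧ vee x = (⇑σ.symm)^[r] x ∧ D.breaksEnd σ ((⇑σ.symm)^[r] x) ∧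
        ∀ r' : ℕ, 1 ≤ r' → r' < r → ¬ D.breaksEnd σ ((⇑σ.symm)^[r'] x)) ∧
    ((¬ ∃ r : ℕ, 1 ≤ r ∧ D.breaksEnd σ ((⇑σ.symm)^[r] x)) →
      ∃ t : Fin D.l, (t : ℤ) = d x ∧ vee x = Sum.inr t)

/-- The multisegment `𝔪` of the data. -/
def mSeg : Multiset Segment := Multiset.map D.iseg Finset.univ.val

/-- The ladder multisegment `𝔩` of the data. -/
def lSeg : Multiset Segment := Multiset.map D.jseg Finset.univ.val

end KVData

namespace KVData

variable {D : KVData} {d' : Fin D.n → ℕ} {d : Fin D.n ⊕ Fin D.l → ℤ}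
  {σ : Equiv.Perm (Fin D.n ⊕ Fin D.l)}

/-! ### The depth function -/

lemma depth_le (hdep : D.DepthSpec d' d) (x : Fin D.n) : d (Sum.inl x) ≤ d' x :=
  (hdep.2.1 x).2 ⟨0, fun _ => x, rfl, by simp, by simp⟩

lemma depth_lt_of_ll (hdep : D.DepthSpec d' d) {x y : Fin D.n}
    (h : Segment.ll (D.iseg y) (D.iseg x)) : d (Sum.inl x) + 1 ≤ d (Sum.inl y) := by
  obtain ⟨k, c, h0, hc, hz⟩ := (hdep.2.1 y).1
  -- prepend `x` to a chain realising the depth of `y`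
  have hmem : d (Sum.inl y) - 1 ∈ D.depthSet d' x := by
    refine ⟨k + 1, fun r => Nat.casesOn r x c, rfl, ?_, ?_⟩
    · intro r hr
      cases r with
      | zero => simpa [h0] using h
      | succ r => exact hc r (by omega)
    · simp only [hz]
      push_cast
      ring
  have := (hdep.2.1 x).2 hmem
  omega

lemma depth_cases (hdep : D.DepthSpec d' d) (x : Fin D.n) :
    d (Sum.inl x) = d' x ∨
      ∃ y, Segment.ll (D.iseg y) (D.iseg x) ∧ d (Sum.inl y) = d (Sum.inl x) + 1 := by
  obtain ⟨k, c, h0, hc, hz⟩ := (hdep.2.1 x).1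
  cases k with
  | zero => left; simp [hz, h0]
  | succ k =>
    right
    have hll : Segment.ll (D.iseg (c 1)) (D.iseg x) := by
      have := hc 0 (by omega)
      rwa [h0] at this
    refine ⟨c 1, hll, ?_⟩
    have h1 := depth_lt_of_ll hdep hll
    have hmem : (d' (c (k + 1)) : ℤ) - k ∈ D.depthSet d' (c 1) :=
      ⟨k, fun r => c (r + 1), rfl, fun r hr => hc (r + 1) (by omega), rfl⟩
    have h2 := (hdep.2.1 (c 1)).2 hmem
    push_cast at hz
    omega

lemma ladder_anti {t t' : Fin D.l} (h : t ≤ t') :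
    (D.jseg t').b ≤ (D.jseg t).b ∧ (D.jseg t').e ≤ (D.jseg t).e := by
  rcases h.eq_or_lt with rfl | h
  · exact ⟨le_rfl, le_rfl⟩
  · exact ⟨(D.ladder _ _ h).1.le, (D.ladder _ _ h).2.le⟩

lemma le_jseg (hdep : D.DepthSpec d' d) {x : Fin D.n} {t : Fin D.l}
    (h : (t : ℤ) ≤ d (Sum.inl x)) :
    (D.iseg x).b ≤ (D.jseg t).b ∧ (D.iseg x).e ≤ (D.jseg t).e := by
  obtain ⟨hl, h1, h2⟩ := (hdep.1 x).1
  have h3 := depth_le hdep x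
  have h4 := ladder_anti (D := D) (t := t) (t' := ⟨d' x, hl⟩)
    (by rw [Fin.le_def]; simp only; omega)
  simp only [Segment.shiftDown] at h1 h2
  omega

lemma le_dPrime (hdep : D.DepthSpec d' d) {x : Fin D.n} {t : Fin D.l}
    (hb : (D.iseg x).b ≤ (D.jseg t).b) (he : (D.iseg x).e ≤ (D.jseg t).e) : (t : ℕ) ≤ d' x :=
  (hdep.1 x).2 ⟨t.2, by simp only [Segment.shiftDown, Fin.eta]; omega,
    by simp only [Segment.shiftDown, Fin.eta]; omega⟩

/-- An intermediate value property of the depth: following a chain that realises the depth of `x`,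
every depth value `t` is met as long as `Δ_{j_t}` still dominates `Δ_x`. -/
lemma exists_ll_of_depth_lt (hdep : D.DepthSpec d' d) {t : Fin D.l} :
    ∀ (k : ℕ) (x : Fin D.n), d (Sum.inl x) + (k + 1) = t →
      (D.iseg x).b ≤ (D.jseg t).b → (D.iseg x).e ≤ (D.jseg t).e →
      ∃ y, Segment.ll (D.iseg y) (D.iseg x) ∧ d (Sum.inl y) = t := by
  intro k
  induction k with
  | zero =>
    intro x hx hb he
    have h1 := le_dPrime hdep hb he
    rcases depth_cases hdep x with h | ⟨y, hy, hd⟩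
    · omega
    · exact ⟨y, hy, by push_cast at hx; omega⟩
  | succ k ih =>
    intro x hx hb he
    have h1 := le_dPrime hdep hb he
    rcases depth_cases hdep x with h | ⟨y, hy, hd⟩
    · omega
    · obtain ⟨z, hz, hdz⟩ := ih y (by push_cast at hx; omega) (hy.1.le.trans hb) (hy.2.le.trans he)
      exact ⟨z, ⟨hz.1.trans hy.1, hz.2.trans hy.2⟩, hdz⟩

lemma exists_fin_eq_depth (hσ : D.SigmaSpec d σ) (x : Fin D.n) :
    ∃ t : Fin D.l, (t : ℤ) = d (Sum.inl x) := by
  induction x using WellFoundedLT.induction with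
  | ind x ih =>
    rcases hσ.1 x with ⟨y, hy, -⟩ | ⟨-, t, ht, -⟩
    · obtain ⟨t, ht⟩ := ih y hy.1.1
      exact ⟨t, ht.trans hy.1.2⟩
    · exact ⟨t, ht⟩

/-! ### Monotonicity along a cycle -/

lemma b_mono {x y : Fin D.n} (h : x ≤ y) : (D.iseg x).b ≤ (D.iseg y).b := by
  rcases h.eq_or_lt with rfl | h
  · exact le_rfl
  · rcases D.iOrder y x h with h | h <;> omega

lemma lt_of_b_lt {x y : Fin D.n} (h : (D.iseg x).b < (D.iseg y).b) : x < y := by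
  by_contra hc
  have := b_mono (D := D) (not_lt.1 hc)
  omega

lemma e_anti (hdep : D.DepthSpec d' d) {x y : Fin D.n} (h : x ≤ y)
    (hd : d (Sum.inl x) = d (Sum.inl y)) : (D.iseg y).e ≤ (D.iseg x).e := by
  rcases h.eq_or_lt with rfl | h
  · exact le_rfl
  · rcases D.iOrder y x h with hb | hb
    · by_contra hc
      have := depth_lt_of_ll hdep (x := y) (y := x) ⟨hb, not_le.1 hc⟩
      omega
    · exact hb.2

/-- `σ y` lies weakly between `y` and any smaller element `x` of its fiber. -/
lemma sigma_e_le (hdep : D.DepthSpec d' d) (hσ : D.SigmaSpec d σ) {x y : Fin D.n} (h : x < y)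
    (hd : d (Sum.inl x) = d (Sum.inl y)) : (D.segOf (σ (Sum.inl y))).e ≤ (D.iseg x).e := by
  rcases hσ.1 y with ⟨z, hz, hs⟩ | ⟨hn, -⟩
  · rw [hs]
    exact e_anti hdep (hz.2 ⟨h, hd⟩) (hd.trans hz.1.2.symm)
  · exact absurd ⟨x, h, hd⟩ hn

lemma sigma_inr_e_le (hdep : D.DepthSpec d' d) (hσ : D.SigmaSpec d σ) {x : Fin D.n} {t : Fin D.l}
    (hd : d (Sum.inl x) = t) : (D.segOf (σ (Sum.inr t))).e ≤ (D.iseg x).e := by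
  rcases hσ.2 t with ⟨z, hz, hs⟩ | ⟨hn, -⟩
  · rw [hs]
    exact e_anti hdep (hz.2 hd) (hd.trans hz.1.symm)
  · exact absurd ⟨x, hd⟩ hn

lemma sigma_e_le_jseg (hdep : D.DepthSpec d' d) (hσ : D.SigmaSpec d σ) {x : Fin D.n} {t : Fin D.l}
    (hd : d (Sum.inl x) = t) : (D.segOf (σ (Sum.inl x))).e ≤ (D.jseg t).e := by
  rcases hσ.1 x with ⟨z, hz, hs⟩ | ⟨-, u, hu, hs⟩
  · rw [hs]
    have h1 : d (Sum.inl z) = d (Sum.inl x) := hz.1.2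
    exact (le_jseg hdep (x := z) (t := t) (by omega)).2
  · rw [hs]
    have : u = t := by ext; omega
    subst this
    exact le_rfl

/-! ### Entering and leaving the run of end point `e(Δ_i)` -/

variable (D σ) in
/-- The second coordinates of `ν₁ ∩ ({i} × I)`. -/
def nu1 (i : Fin D.n) : Set (Fin D.n) :=
  {i₂ | (D.iseg i).b ≤ (D.iseg i₂).b ∧ (D.iseg i₂).e < (D.segOf (σ (Sum.inl i₂))).e ∧
    (D.segOf (σ (Sum.inl i₂))).e = (D.iseg i).e}

variable (D σ) in
/-- The second coordinates of `ν₂ ∩ ({i} × I)`. -/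
def nu2 (i : Fin D.n) : Set (Fin D.n) :=
  {i₂ | (D.iseg i).b < (D.iseg i₂).b ∧ (D.iseg i).e = (D.iseg i₂).e ∧
    (D.iseg i₂).e < (D.segOf (σ (Sum.inl i₂))).e}

variable (D σ) in
/-- The second coordinates of `ν₃ ∩ ({i} × J)`. -/
def nu3 (i : Fin D.n) : Set (Fin D.l) :=
  {j | (D.iseg i).b ≤ (D.jseg j).b ∧ (D.segOf (σ (Sum.inr j))).e = (D.iseg i).e}

variable (D d σ) in
/-- The cycle of depth `t` contributes to `ν₁` or `ν₃`. -/
def Enter (i : Fin D.n) (t : ℤ) : Prop :=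
  (∃ x ∈ nu1 D σ i, d (Sum.inl x) = t) ∨ ∃ u ∈ nu3 D σ i, (u : ℤ) = t

variable (D d σ) in
/-- The cycle of depth `t` contributes to `ν₂`. -/
def Leave (i : Fin D.n) (t : ℤ) : Prop := ∃ x ∈ nu2 D σ i, d (Sum.inl x) = t

lemma nu1_injOn (hdep : D.DepthSpec d' d) (hσ : D.SigmaSpec d σ) (i : Fin D.n) :
    Set.InjOn (fun x => d (Sum.inl x)) (nu1 D σ i) := by
  have key : ∀ x ∈ nu1 D σ i, ∀ y ∈ nu1 D σ i, d (Sum.inl x) = d (Sum.inl y) → ¬ x < y := by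
    rintro x ⟨-, hx1, hx2⟩ y ⟨-, hy1, hy2⟩ hd h
    have := sigma_e_le hdep hσ h hd
    omega
  intro x hx y hy hd
  exact le_antisymm (not_lt.1 (key y hy x hx hd.symm)) (not_lt.1 (key x hx y hy hd))

lemma nu2_injOn (hdep : D.DepthSpec d' d) (hσ : D.SigmaSpec d σ) (i : Fin D.n) :
    Set.InjOn (fun x => d (Sum.inl x)) (nu2 D σ i) := by
  have key : ∀ x ∈ nu2 D σ i, ∀ y ∈ nu2 D σ i, d (Sum.inl x) = d (Sum.inl y) → ¬ x < y := by
    rintro x ⟨-, hx1, hx2⟩ y ⟨-, hy1, hy2⟩ hd h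
    have := sigma_e_le hdep hσ h hd
    omega
  intro x hx y hy hd
  exact le_antisymm (not_lt.1 (key y hy x hx hd.symm)) (not_lt.1 (key x hx y hy hd))

/-- The run is entered before or at `x`: the source of the entering step is the smallest element of
the fiber with end point below `e`, or `j_t` if there is none. -/
lemma enter_of_mem (hdep : D.DepthSpec d' d) (hσ : D.SigmaSpec d σ) {i x : Fin D.n}
    (hb : (D.iseg i).b ≤ (D.iseg x).b) (he : (D.iseg x).e = (D.iseg i).e) :
    Enter D d σ i (d (Sum.inl x)) := by
  classical
  by_cases hS : ∃ y, d (Sum.inl y) = d (Sum.inl x) ∧ (D.iseg y).e < (D.iseg i).e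
  · obtain ⟨y, ⟨hyd, hye⟩, hmin⟩ := WellFounded.has_min (wellFounded_lt (α := Fin D.n))
      {y | d (Sum.inl y) = d (Sum.inl x) ∧ (D.iseg y).e < (D.iseg i).e} hS
    have hxy : x < y := by
      by_contra hc
      have := e_anti hdep (not_lt.1 hc) hyd
      omega
    have h1 := sigma_e_le hdep hσ hxy hyd.symm
    have h2 : (D.iseg i).e ≤ (D.segOf (σ (Sum.inl y))).e := by
      rcases hσ.1 y with ⟨z, hz, hs⟩ | ⟨hn, -⟩
      · rw [hs]
        by_contra hc
        exact hmin z ⟨hz.1.2.trans hyd, not_le.1 hc⟩ hz.1.1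
      · exact absurd ⟨x, hxy, hyd.symm⟩ hn
    have h3 := b_mono (D := D) hxy.le
    exact Or.inl ⟨y, ⟨by omega, by omega, by omega⟩, hyd⟩
  · obtain ⟨t, ht⟩ := exists_fin_eq_depth hσ x
    have h1 := sigma_inr_e_le hdep hσ ht.symm
    have h2 := le_jseg hdep (x := x) (t := t) ht.le
    have h3 : (D.iseg i).e ≤ (D.segOf (σ (Sum.inr t))).e := by
      rcases hσ.2 t with ⟨z, hz, hs⟩ | ⟨hn, -⟩
      · rw [hs]
        by_contra hc
        exact hS ⟨z, hz.1.trans ht, not_le.1 hc⟩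
      · exact absurd ⟨x, ht.symm⟩ hn
    exact Or.inr ⟨t, ⟨by omega, by omega⟩, ht⟩

lemma not_leave_self (hdep : D.DepthSpec d' d) (hσ : D.SigmaSpec d σ) (i : Fin D.n) :
    ¬ Leave D d σ i (d (Sum.inl i)) := by
  rintro ⟨y, ⟨h1, h2, h3⟩, hd⟩
  have := sigma_e_le hdep hσ (lt_of_b_lt h1) hd.symm
  omega

lemma not_enter_of_gt (hdep : D.DepthSpec d' d) (hσ : D.SigmaSpec d σ) {i : Fin D.n} {t : Fin D.l}
    (h : d (Sum.inl i) < t) : ¬ Enter D d σ i t := by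
  have key := fun hb he => exists_ll_of_depth_lt hdep (t := t)
    (t - d (Sum.inl i) - 1).toNat i (by omega) hb he
  rintro (⟨y, ⟨h1, h2, h3⟩, hd⟩ | ⟨u, ⟨h1, h2⟩, hu⟩)
  · have h4 := (le_jseg hdep (x := y) (t := t) hd.ge).1
    have h5 := sigma_e_le_jseg hdep hσ hd
    obtain ⟨z, hz, hzd⟩ := key (by omega) (by omega)
    have h6 := sigma_e_le hdep hσ (x := z) (y := y) (lt_of_b_lt (hz.1.trans_le h1))
      (hzd.trans hd.symm)
    have := hz.2
    omega
  · have hut : u = t := by ext; omega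
    subst hut
    have h5 : (D.iseg i).e ≤ (D.jseg u).e := by
      rw [← h2]
      rcases hσ.2 u with ⟨z, hz, hs⟩ | ⟨-, hs⟩
      · rw [hs]
        exact (le_jseg hdep (x := z) (t := u) (le_of_eq hz.1.symm)).2
      · rw [hs]
        exact le_rfl
    obtain ⟨z, hz, hzd⟩ := key h1 h5
    have h6 := sigma_inr_e_le hdep hσ hzd
    have := hz.2
    omega

lemma leave_of_enter (hdep : D.DepthSpec d' d) (hσ : D.SigmaSpec d σ) {i : Fin D.n} {t : Fin D.l}
    (hne : (t : ℤ) ≠ d (Sum.inl i)) (h : Enter D d σ i t) : Leave D d σ i t := by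
  rcases lt_or_gt_of_ne hne with hlt | hgt
  swap
  · exact absurd h (not_enter_of_gt hdep hσ hgt)
  obtain ⟨ti, hti⟩ := exists_fin_eq_depth hσ i
  have hi := le_jseg hdep hti.le
  have hj : (D.iseg i).e < (D.jseg t).e :=
    hi.2.trans_lt (D.ladder t ti (by rw [Fin.lt_def]; omega)).2
  have hex : ∃ x, d (Sum.inl x) = t ∧ (D.iseg x).e = (D.iseg i).e := by
    rcases h with ⟨y, ⟨-, -, h3⟩, hd⟩ | ⟨u, ⟨-, h2⟩, hu⟩
    · rcases hσ.1 y with ⟨z, hz, hs⟩ | ⟨-, u, hu, hs⟩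
      · rw [hs] at h3
        exact ⟨z, hz.1.2.trans hd, h3⟩
      · rw [hs] at h3
        have hut : u = t := by ext; omega
        subst hut
        exact absurd h3 (ne_of_gt hj)
    · have hut : u = t := by ext; omega
      subst hut
      rcases hσ.2 u with ⟨z, hz, hs⟩ | ⟨-, hs⟩
      · rw [hs] at h2
        exact ⟨z, hz.1, h2⟩
      · rw [hs] at h2
        exact absurd h2 (ne_of_gt hj)
  -- the last element of the run is the smallest index in the fiber with end point `e(Δ_i)`
  obtain ⟨x, ⟨hxd, hxe⟩, hmin⟩ := WellFounded.has_min (wellFounded_lt (α := Fin D.n))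
    {x | d (Sum.inl x) = t ∧ (D.iseg x).e = (D.iseg i).e} hex
  refine ⟨x, ⟨?_, hxe.symm, ?_⟩, hxd⟩
  · by_contra hc
    rcases depth_cases hdep x with hx | ⟨y, hy, hyd⟩
    · have h1 := ladder_anti (D := D) (t := ⟨t + 1, by omega⟩) (t' := ti)
        (by rw [Fin.le_def]; simp only; omega)
      have h2 := le_dPrime hdep (x := x) (t := ⟨t + 1, by omega⟩) (by omega) (by omega)
      simp only at h2
      omega
    · have h1 := depth_lt_of_ll hdep (x := i) (y := y)
        ⟨hy.1.trans_le (not_lt.1 hc), hxe ▸ hy.2⟩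
      omega
  · rcases hσ.1 x with ⟨z, hz, hs⟩ | ⟨-, u, hu, hs⟩
    · rw [hs]
      have h1 := e_anti hdep hz.1.1.le hz.1.2
      refine lt_of_le_of_ne h1 fun h2 => hmin z ⟨hz.1.2.trans hxd, ?_⟩ hz.1.1
      exact h2.symm.trans hxe
    · rw [hs]
      have hut : u = t := by ext; omega
      subst hut
      exact hxe.trans_lt hj

/-! ### Counting depths -/

lemma ncard_nu (hdep : D.DepthSpec d' d) (hσ : D.SigmaSpec d σ) (i : Fin D.n) :
    (nu1 D σ i).ncard + (nu3 D σ i).ncard = (nu2 D σ i).ncard + 1 := by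
  classical
  have h1 := (nu1_injOn hdep hσ i).ncard_image
  have h2 := (nu2_injOn hdep hσ i).ncard_image
  have h3 := Set.ncard_image_of_injective (nu3 D σ i)
    (f := fun u : Fin D.l => (u : ℤ)) (fun u v h => by ext; simpa using h)
  have hdisj : Disjoint ((fun x => d (Sum.inl x)) '' nu1 D σ i)
      ((fun u : Fin D.l => (u : ℤ)) '' nu3 D σ i) := by
    rw [Set.disjoint_left]
    rintro _ ⟨x, ⟨-, hx1, hx2⟩, rfl⟩ ⟨u, ⟨-, hu2⟩, hu⟩
    have := sigma_inr_e_le hdep hσ (x := x) (t := u) hu.symm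
    omega
  have hnot : d (Sum.inl i) ∉ (fun x => d (Sum.inl x)) '' nu2 D σ i :=
    not_leave_self hdep hσ i
  rw [← h1, ← h2, ← h3, ← Set.ncard_union_eq hdisj (Set.toFinite _) (Set.toFinite _),
    ← Set.ncard_insert_of_notMem hnot (Set.toFinite _)]
  congr 1
  ext t
  change Enter D d σ i t ↔ t = d (Sum.inl i) ∨ Leave D d σ i t
  constructor
  · intro h
    by_cases ht : t = d (Sum.inl i)
    · exact Or.inl ht
    · obtain ⟨u, rfl⟩ : ∃ u : Fin D.l, (u : ℤ) = t := by
        rcases h with ⟨x, -, rfl⟩ | ⟨u, -, hu⟩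
        · exact exists_fin_eq_depth hσ x
        · exact ⟨u, hu⟩
      exact Or.inr (leave_of_enter hdep hσ ht h)
  · rintro (rfl | ⟨x, ⟨hx1, hx2, -⟩, rfl⟩)
    · exact enter_of_mem hdep hσ le_rfl rfl
    · exact enter_of_mem hdep hσ hx1.le hx2.symm

end KVData

/-- Let `(𝔩,𝔪)` be a permissible pair with the algorithm notations in
place.  Then for each fixed `i ∈ I` the local count
`D_i(𝔩,𝔪) = |ν(𝔩,𝔪)₁ ∩ ({i}×I)| - |ν(𝔩,𝔪)₂ ∩ ({i}×I)| + |ν(𝔩,𝔪)₃ ∩ ({i}×J)|`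
equals `1` (recall `e(Δ♣_x) = e(Δ_{σ(x)})` and `b(Δ♣_x) = b(Δ_x)`). -/
theorem D_invariant_local (D : KVData) (d' : Fin D.n → ℕ)
    (d : Fin D.n ⊕ Fin D.l → ℤ) (σ : Equiv.Perm (Fin D.n ⊕ Fin D.l))
    (hdep : D.DepthSpec d' d) (hσ : D.SigmaSpec d σ) (i : Fin D.n) :
    (({i₂ : Fin D.n |
        (D.iseg i).b ≤ (D.iseg i₂).b ∧
        (D.iseg i₂).e < (D.segOf (σ (Sum.inl i₂))).e ∧
        (D.segOf (σ (Sum.inl i₂))).e = (D.iseg i).e}.ncard : ℤ)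
      - ({i₂ : Fin D.n |
        (D.iseg i).b < (D.iseg i₂).b ∧
        (D.iseg i).e = (D.iseg i₂).e ∧
        (D.iseg i₂).e < (D.segOf (σ (Sum.inl i₂))).e}.ncard : ℤ)
      + ({j : Fin D.l |
        (D.iseg i).b ≤ (D.jseg j).b ∧
        (D.segOf (σ (Sum.inr j))).e = (D.iseg i).e}.ncard : ℤ)) = 1 := by
  have h := KVData.ncard_nu hdep hσ i
  simp only [KVData.nu1, KVData.nu2, KVData.nu3] at h
  omega
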